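/- The curve γ : ℝ → ℂ given by γ(t) = √2·e^{it/√2} is parametrized by arclength (‖γ'(t)‖ = 1 for all t) and satisfies the Anciaux equation γ''(t) = ⟨γ'(t), i·γ(t)⟩·((|γ(t)|² − 1)/|γ(t)|²) · i·γ'(t) for all t; its curvature is the constant 1/√2 and |γ(t)|² = 2. (This is the profile curve whose associated Anciaux immersion is the Clifford torus.) -/

import Mathlib

/-- Real inner product on ℂ ≅ ℝ²: ⟨u,v⟩ = Re(u · conj v). -/
noncomputable def rinner (u v : ℂ) : ℝ := u.re * v.re + u.im * v.im

/-- The profile curve γ(t) = √2 e^{it/√2} of the Clifford torus. -/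
noncomputable def cliffordCurve : ℝ → ℂ :=
  fun t => (Real.sqrt 2 : ℂ) * Complex.exp (Complex.I * t / (Real.sqrt 2 : ℂ))

/-!
The circle `γ` of radius `r` about the origin, parametrized by arclength, satisfies `γ' = r⁻¹ i γ`,
hence `γ'' = r⁻¹ i γ'`. Since `⟨γ', iγ⟩ = r` and `|γ|² = r²`, the Anciaux equation reduces to the
scalar equation `1/r = r (r² - 1)/r²`, that is, to `r² = 2`.
-/

open Complex

theorem rinner_eq_inner (u v : ℂ) : rinner u v = inner ℝ u v := by
  rw [Complex.inner, rinner, mul_re, conj_re, conj_im]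
  ring

/-- The Anciaux equation for a curve in `ℂ`, in the form it takes for an arclength
parametrization avoiding the origin; neither condition is part of the predicate, and where `γ`
vanishes the quotient is `0`. -/
def SatisfiesAnciauxEquation (γ : ℝ → ℂ) : Prop :=
  ∀ t, deriv (deriv γ) t =
    (rinner (deriv γ t) (I * γ t) * ((‖γ t‖ ^ 2 - 1) / ‖γ t‖ ^ 2)) • (I * deriv γ t)

/-- The signed curvature of an arclength-parametrized curve in `ℂ`: the component of `γ''` along
the unit normal `iγ'`. For other parametrizations it is not normalized by the speed. -/
noncomputable def signedCurvature (γ : ℝ → ℂ) (t : ℝ) : ℝ :=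
  rinner (deriv (deriv γ) t) (I * deriv γ t)

/-- The circle of radius `r` about the origin, parametrized by arclength; a negative `r` gives the
circle of radius `|r|` traversed clockwise, and `r = 0` the constant curve `0`. -/
noncomputable def arclengthCircle (r : ℝ) : ℝ → ℂ :=
  fun t => circleMap 0 r (t / r)

theorem norm_arclengthCircle (r t : ℝ) : ‖arclengthCircle r t‖ = |r| :=
  norm_circleMap_zero r (t / r)

theorem hasDerivAt_arclengthCircle (r t : ℝ) :
    HasDerivAt (arclengthCircle r) (r⁻¹ • (I * arclengthCircle r t)) t := by
  have hangle : HasDerivAt (fun t : ℝ => t / r) r⁻¹ t := by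
    simpa only [one_div] using (hasDerivAt_id' t).div_const r
  have hcircle := (hasDerivAt_circleMap 0 r (t / r)).scomp t hangle
  rwa [mul_comm] at hcircle

theorem deriv_arclengthCircle (r : ℝ) :
    deriv (arclengthCircle r) = fun t => r⁻¹ • (I * arclengthCircle r t) :=
  funext fun t => (hasDerivAt_arclengthCircle r t).deriv

theorem deriv_deriv_arclengthCircle (r t : ℝ) :
    deriv (deriv (arclengthCircle r)) t = r⁻¹ • (I * deriv (arclengthCircle r) t) := by
  have hderiv := ((hasDerivAt_arclengthCircle r t).const_mul I).const_smul r⁻¹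
  rw [deriv_arclengthCircle]
  exact hderiv.deriv

theorem norm_deriv_arclengthCircle {r : ℝ} (hr : r ≠ 0) (t : ℝ) :
    ‖deriv (arclengthCircle r) t‖ = 1 := by
  rw [deriv_arclengthCircle, norm_smul, norm_mul, norm_I, one_mul, norm_arclengthCircle,
    norm_inv, Real.norm_eq_abs, inv_mul_cancel₀ (abs_ne_zero.mpr hr)]

theorem norm_I_mul_deriv_arclengthCircle {r : ℝ} (hr : r ≠ 0) (t : ℝ) :
    ‖I * deriv (arclengthCircle r) t‖ = 1 := by
  rw [norm_mul, norm_I, one_mul, norm_deriv_arclengthCircle hr t]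

theorem rinner_deriv_arclengthCircle_I_mul {r : ℝ} (hr : r ≠ 0) (t : ℝ) :
    rinner (deriv (arclengthCircle r) t) (I * arclengthCircle r t) = r := by
  have hrotate : I * arclengthCircle r t = r • deriv (arclengthCircle r) t := by
    rw [deriv_arclengthCircle, smul_inv_smul₀ hr]
  rw [hrotate, rinner_eq_inner, real_inner_smul_right, real_inner_self_eq_norm_sq,
    norm_deriv_arclengthCircle hr t, one_pow, mul_one]

theorem signedCurvature_arclengthCircle {r : ℝ} (hr : r ≠ 0) (t : ℝ) :
    signedCurvature (arclengthCircle r) t = r⁻¹ := by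
  rw [signedCurvature, deriv_deriv_arclengthCircle, rinner_eq_inner, real_inner_smul_left,
    real_inner_self_eq_norm_sq, norm_I_mul_deriv_arclengthCircle hr t, one_pow, mul_one]

theorem satisfiesAnciauxEquation_arclengthCircle_iff {r : ℝ} (hr : r ≠ 0) :
    SatisfiesAnciauxEquation (arclengthCircle r) ↔ r ^ 2 = 2 := by
  have hnormal (t : ℝ) : I * deriv (arclengthCircle r) t ≠ 0 :=
    norm_ne_zero_iff.mp (by rw [norm_I_mul_deriv_arclengthCircle hr t]; exact one_ne_zero)
  have hscalar : r⁻¹ = r * ((r ^ 2 - 1) / r ^ 2) ↔ r ^ 2 = 2 := by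
    field_simp
    constructor <;> intro h <;> linarith
  simp only [SatisfiesAnciauxEquation, deriv_deriv_arclengthCircle,
    rinner_deriv_arclengthCircle_I_mul hr, norm_arclengthCircle, sq_abs,
    (smul_left_injective ℝ (hnormal _)).eq_iff, hscalar, forall_const]

theorem cliffordCurve_eq_arclengthCircle : cliffordCurve = arclengthCircle √2 := by
  funext t
  rw [cliffordCurve, arclengthCircle, circleMap_zero, ofReal_div, mul_comm I, mul_div_right_comm]

/-- The curve γ(t) = √2 e^{it/√2} is parametrized by arclength, satisfies the
Anciaux equation, has constant curvature 1/√2 and |γ|² = 2.  (It is the profile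
curve of the Clifford torus among the Anciaux tori.) -/
theorem clifford_profile_curve :
    (∀ t, ‖deriv cliffordCurve t‖ = 1) ∧
    (∀ t, deriv (deriv cliffordCurve) t =
      (rinner (deriv cliffordCurve t) (Complex.I * cliffordCurve t)
          * ((‖cliffordCurve t‖ ^ 2 - 1) / ‖cliffordCurve t‖ ^ 2))
        • (Complex.I * deriv cliffordCurve t)) ∧
    (∀ t, rinner (deriv (deriv cliffordCurve) t) (Complex.I * deriv cliffordCurve t)
        = 1 / Real.sqrt 2) ∧
    (∀ t, ‖cliffordCurve t‖ ^ 2 = 2) := by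
  have hsqrt : √(2 : ℝ) ≠ 0 := by positivity
  have hsq : √(2 : ℝ) ^ 2 = 2 := Real.sq_sqrt zero_le_two
  rw [cliffordCurve_eq_arclengthCircle]
  refine ⟨norm_deriv_arclengthCircle hsqrt,
    (satisfiesAnciauxEquation_arclengthCircle_iff hsqrt).mpr hsq,
    fun t => (signedCurvature_arclengthCircle hsqrt t).trans (one_div _).symm, fun t => ?_⟩
  rw [norm_arclengthCircle, sq_abs, hsq]
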